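/- Let U be a squared four-dimensional Bessel process started at 0 and τ₁^U := inf{ t ≥ 0 : Ū(t) − U(t) ≥ 1 } with Ū(t) := sup_{s ∈ [0,t]} U(s). There exists a constant c > 0 such that for all a ≥ 2, P{ τ₁^U > a } ≤ exp(−c a^{1/2}). -/

import Mathlib

open MeasureTheory ProbabilityTheory Real Set Filter

noncomputable section

variable {Ω : Type*} [MeasurableSpace Ω]

/-- A standard one-dimensional Brownian motion (indexed by `ℝ`, with the relevant
properties required for nonnegative times): starts at `0`, has continuous paths,
independent increments, and Gaussian increments of variance `t - s`. -/
structure IsStdBM (P : Measure Ω) (B : ℝ → Ω → ℝ) : Prop where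
  measurable : ∀ t : ℝ, Measurable (B t)
  start : ∀ ω, B 0 ω = 0
  cont : ∀ ω, Continuous fun t => B t ω
  indep : ∀ (n : ℕ) (t : Fin (n + 1) → ℝ), (∀ i, 0 ≤ t i) → Monotone t →
    iIndepFun
      (fun (i : Fin n) ω => B (t i.succ) ω - B (t i.castSucc) ω) P
  gauss : ∀ s t : ℝ, 0 ≤ s → s ≤ t →
    P.map (fun ω => B t ω - B s ω) = gaussianReal 0 (Real.toNNReal (t - s))

/-- A standard `d`-dimensional Brownian motion started at `0`: the coordinate
processes are independent standard one-dimensional Brownian motions. -/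
structure IsStdBMVec (d : ℕ) (P : Measure Ω) (B : ℝ → Ω → EuclideanSpace ℝ (Fin d)) : Prop where
  coord : ∀ i : Fin d, IsStdBM P (fun t ω => B t ω i)
  indepCoord : iIndepFun
    (fun (i : Fin d) ω => fun t : ℝ => B t ω i) P

/-- Last zero of `W` in `[0,1]`. -/
def lastZero (W : ℝ → Ω → ℝ) (ω : Ω) : ℝ := sSup {t ∈ Icc (0:ℝ) 1 | W t ω = 0}

/-- `m` is a standard Brownian meander: obtained from a Brownian motion `W` by
`m s = |W (g + s (1 - g))| / √(1 - g)`, where `g` is the last zero of `W` before time `1`. -/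
def IsBrownianMeander (P : Measure Ω) (m : ℝ → Ω → ℝ) : Prop :=
  ∃ W : ℝ → Ω → ℝ, IsStdBM P W ∧
    ∀ ω, ∀ s ∈ Icc (0:ℝ) 1,
      m s ω = |W (lastZero W ω + s * (1 - lastZero W ω)) ω| / Real.sqrt (1 - lastZero W ω)

/-- Running maximum `X̄(t) = sup_{s ∈ [0,t]} X(s)`. -/
def runMax (X : ℝ → Ω → ℝ) (t : ℝ) (ω : Ω) : ℝ := ⨆ s : Icc (0:ℝ) t, X s ω

/-- Maximal drawdown on `[0,T]` : `sup_{s ∈ [0,T]} (X̄(s) - X(s))`. -/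
def maxDDOn (X : ℝ → Ω → ℝ) (T : ℝ) (ω : Ω) : ℝ := ⨆ s : Icc (0:ℝ) T, (runMax X s ω - X s ω)

/-- Drawdown time `τ_λ^X := inf {t ≥ 0 : X̄(t) - X(t) ≥ λ}`. -/
def ddTime (lam : ℝ) (X : ℝ → Ω → ℝ) (ω : Ω) : ℝ :=
  sInf {t | 0 ≤ t ∧ lam ≤ runMax X t ω - X t ω}

/-- Three-dimensional Bessel process built from a 3-dimensional Brownian motion. -/
def bessel3 (β : ℝ → Ω → EuclideanSpace ℝ (Fin 3)) (t : ℝ) (ω : Ω) : ℝ := ‖β t ω‖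

/-- Squared four-dimensional Bessel process built from a 4-dimensional Brownian motion. -/
def sqBessel4 (γ : ℝ → Ω → EuclideanSpace ℝ (Fin 4)) (t : ℝ) (ω : Ω) : ℝ := ‖γ t ω‖ ^ 2

end

open scoped ENNReal

/-!
Whatever the position `x`, the next two increments of the Brownian motion bring the squared norm
down by `lam` with a probability bounded below. With `u = x / ‖x‖` (any unit vector if `x = 0`), let
the first increment be close to `(|lam| + 6) • u` and the second close to `-u`: the inward unit step
then starts so far from the origin that it costs the squared norm at least `lam`. Since `u` ranges
over the compact unit sphere and the increments have a positive density, these events have a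
uniformly positive probability. A drawdown time exceeding `2 * n * v` means that this drop has
failed in `n` consecutive blocks of two increments of duration `v`, so its tail is bounded
geometrically in `n`. This gives `exp (-c * a)`, which is at most `exp (-c * √a)` for `a ≥ 1`.
-/

open scoped NNReal

section NormSqDrop

variable {E : Type*} [NormedAddCommGroup E]

/-- The decrease of the squared norm over the second of two successive displacements `y.1`, `y.2`
from `x`. -/
def normSqDrop (x : E) (y : E × E) : ℝ := ‖x + y.1‖ ^ 2 - ‖x + y.1 + y.2‖ ^ 2

lemma continuous_normSqDrop : Continuous fun p : E × E × E => normSqDrop p.1 p.2 := by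
  unfold normSqDrop
  fun_prop

variable [InnerProductSpace ℝ E]

lemma le_normSq_sub_normSq_add {u w z : E} {r lam : ℝ} (hu : ‖u‖ = 1) (hr : 0 ≤ r)
    (hlam : lam + 6 ≤ r) (hw : w ∈ Metric.ball (r • u) 1) (hz : z ∈ Metric.ball (-u) (1 / 2)) :
    lam ≤ ‖w‖ ^ 2 - ‖w + z‖ ^ 2 := by
  rw [mem_ball_iff_norm] at hw hz
  have z_norm : ‖z‖ ≤ 3 / 2 := by
    calc ‖z‖ = ‖(z - -u) + -u‖ := by rw [sub_add_cancel]
      _ ≤ ‖z - -u‖ + ‖-u‖ := norm_add_le _ _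
      _ ≤ 3 / 2 := by rw [norm_neg, hu]; linarith
  have inner_u_z : inner ℝ u z ≤ -(1 / 2) := by
    have h := real_inner_le_norm u (z - -u)
    rw [inner_sub_right, inner_neg_right, real_inner_self_eq_norm_sq, hu] at h
    linarith
  have inner_error : inner ℝ (w - r • u) z ≤ 3 / 2 := by
    calc inner ℝ (w - r • u) z ≤ ‖w - r • u‖ * ‖z‖ := real_inner_le_norm _ _
      _ ≤ 1 * (3 / 2) := by gcongr
      _ = 3 / 2 := one_mul _
  have inner_w_z : inner ℝ w z = r * inner ℝ u z + inner ℝ (w - r • u) z := by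
    rw [inner_sub_left, real_inner_smul_left]
    ring
  rw [norm_add_sq_real, inner_w_z]
  nlinarith [norm_nonneg z]

lemma exists_norm_eq_one_and_norm_smul_eq [Nontrivial E] (x : E) :
    ∃ u : E, ‖u‖ = 1 ∧ ‖x‖ • u = x := by
  obtain rfl | hx := eq_or_ne x 0
  · obtain ⟨u, hu⟩ := exists_norm_eq E zero_le_one
    exact ⟨u, hu, by simp⟩
  · exact ⟨‖x‖⁻¹ • x, norm_smul_inv_norm hx, smul_inv_smul₀ (norm_ne_zero_iff.2 hx) x⟩

end NormSqDrop

lemma exists_pos_forall_le_measure_ball {E : Type*} [PseudoMetricSpace E] [MeasurableSpace E]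
    (μ : Measure E) [μ.IsOpenPosMeasure] {K : Set E} (hK : IsCompact K) {r : ℝ} (hr : 0 < r) :
    ∃ m : ℝ≥0∞, 0 < m ∧ ∀ x ∈ K, m ≤ μ (Metric.ball x r) := by
  obtain ⟨t, -, ht, K_subset⟩ := hK.finite_cover_balls (half_pos hr)
  refine ⟨ht.toFinset.inf fun y => μ (Metric.ball y (r / 2)),
    (Finset.lt_inf_iff ENNReal.zero_lt_top).2 fun y _ => Metric.measure_ball_pos μ y (half_pos hr),
    fun x hx => ?_⟩
  obtain ⟨y, hy, hxy⟩ := mem_iUnion₂.1 (K_subset hx)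
  refine (Finset.inf_le (ht.mem_toFinset.2 hy)).trans (measure_mono ?_)
  refine Metric.ball_subset_ball' ?_
  rw [Metric.mem_ball'] at hxy
  linarith

section Drop

variable {E : Type*} [NormedAddCommGroup E] [InnerProductSpace ℝ E] [FiniteDimensional ℝ E]
  [Nontrivial E] [MeasurableSpace E]

lemma exists_pos_forall_le_measure_le_normSqDrop (μ : Measure E) [SFinite μ] [μ.IsOpenPosMeasure]
    (lam : ℝ) :
    ∃ m : ℝ≥0∞, 0 < m ∧ ∀ x : E, m ≤ (μ.prod μ) {y | lam ≤ normSqDrop x y} := by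
  obtain ⟨m, hm, outward⟩ := exists_pos_forall_le_measure_ball μ
    (isCompact_sphere (0 : E) (|lam| + 6)) one_pos
  obtain ⟨m', hm', inward⟩ := exists_pos_forall_le_measure_ball μ
    (isCompact_sphere (0 : E) 1) one_half_pos
  refine ⟨m * m', ENNReal.mul_pos hm.ne' hm'.ne', fun x => ?_⟩
  obtain ⟨u, hu, hx⟩ := exists_norm_eq_one_and_norm_smul_eq x
  have hlam : 0 ≤ |lam| + 6 := by positivity
  calc m * m'
      ≤ μ (Metric.ball ((|lam| + 6) • u) 1) * μ (Metric.ball (-u) (1 / 2)) := by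
        gcongr
        · exact outward _ (by simp [norm_smul, hu, abs_of_nonneg hlam])
        · exact inward _ (by simp [hu])
    _ = (μ.prod μ) (Metric.ball ((|lam| + 6) • u) 1 ×ˢ Metric.ball (-u) (1 / 2)) :=
        (Measure.prod_prod _ _).symm
    _ ≤ (μ.prod μ) {y | lam ≤ normSqDrop x y} := measure_mono ?_
  rintro ⟨y, z⟩ ⟨hy, hz⟩
  refine le_normSq_sub_normSq_add (r := ‖x‖ + (|lam| + 6)) hu (by positivity)
    (by linarith [norm_nonneg x, le_abs_self lam]) ?_ hz
  rw [mem_ball_iff_norm] at hy ⊢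
  rwa [add_smul, hx, add_sub_add_left_eq_sub]

lemma exists_lt_one_forall_measure_normSqDrop_lt_le [BorelSpace E] (μ : Measure E)
    [IsProbabilityMeasure μ] [μ.IsOpenPosMeasure] (lam : ℝ) :
    ∃ q : ℝ≥0∞, q < 1 ∧ ∀ x : E, (μ.prod μ) {y | normSqDrop x y < lam} ≤ q := by
  obtain ⟨m, hm, drop⟩ := exists_pos_forall_le_measure_le_normSqDrop μ lam
  refine ⟨1 - m, ENNReal.sub_lt_self ENNReal.one_ne_top one_ne_zero hm.ne', fun x => ?_⟩
  have measurable_drop : MeasurableSet {y | lam ≤ normSqDrop x y} :=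
    (isClosed_le continuous_const
      (continuous_normSqDrop.comp (Continuous.prodMk_right x))).measurableSet
  calc (μ.prod μ) {y | normSqDrop x y < lam} = 1 - (μ.prod μ) {y | lam ≤ normSqDrop x y} := by
        rw [← prob_compl_eq_one_sub measurable_drop, compl_ofPred]
        simp only [not_le]
    _ ≤ 1 - m := tsub_le_tsub_left (drop x) 1

end Drop

section Trials

variable {Ω E F : Type*} [MeasurableSpace E] [MeasurableSpace F]

lemma map_restrict_prodMk_of_indep {m mΩ : MeasurableSpace Ω} {P : Measure Ω} [IsFiniteMeasure P]
    (hm : m ≤ mΩ) {X : Ω → E} {Y : Ω → F} (hX : Measurable[m] X) (hY : Measurable Y)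
    (hXY : Indep m (MeasurableSpace.comap Y inferInstance) P) {A : Set Ω}
    (hA : MeasurableSet[m] A) :
    (P.restrict A).map (fun ω => (X ω, Y ω)) = ((P.restrict A).map X).prod (P.map Y) := by
  have hX' : Measurable X := hX.mono hm le_rfl
  refine (Measure.prod_eq fun S T hS hT => ?_).symm
  rw [Measure.map_apply (hX'.prodMk hY) (hS.prod hT), Measure.map_apply hX' hS,
    Measure.map_apply hY hT, Measure.restrict_apply (hX' hS),
    Measure.restrict_apply (hX'.prodMk hY (hS.prod hT)),
    ← (Indep_iff _ _ _).1 hXY _ _ ((hX hS).inter hA) ⟨T, hT, rfl⟩]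
  congr 1
  ext ω
  simp only [mem_inter_iff, mem_preimage, mem_prod]
  tauto

lemma measure_inter_prodMk_mem_le_mul_of_indep {m mΩ : MeasurableSpace Ω} {P : Measure Ω}
    [IsFiniteMeasure P] (hm : m ≤ mΩ) {X : Ω → E} {Y : Ω → F} (hX : Measurable[m] X)
    (hY : Measurable Y) (hXY : Indep m (MeasurableSpace.comap Y inferInstance) P) {A : Set Ω}
    (hA : MeasurableSet[m] A) {T : Set (E × F)} (hT : MeasurableSet T) {q : ℝ≥0∞}
    (hq : ∀ x, P.map Y {y | (x, y) ∈ T} ≤ q) :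
    P (A ∩ {ω | (X ω, Y ω) ∈ T}) ≤ P A * q := by
  have hX' : Measurable X := hX.mono hm le_rfl
  have hXY' : Measurable fun ω => (X ω, Y ω) := hX'.prodMk hY
  calc P (A ∩ {ω | (X ω, Y ω) ∈ T})
      = (P.restrict A).map (fun ω => (X ω, Y ω)) T := by
        rw [Measure.map_apply hXY' hT, Measure.restrict_apply (hXY' hT), inter_comm]
        rfl
    _ = ∫⁻ x, P.map Y (Prod.mk x ⁻¹' T) ∂(P.restrict A).map X := by
        rw [map_restrict_prodMk_of_indep hm hX hY hXY hA, Measure.prod_apply hT]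
    _ ≤ ∫⁻ _, q ∂(P.restrict A).map X := lintegral_mono hq
    _ = P A * q := by
        rw [lintegral_const, Measure.map_apply hX' .univ, preimage_univ,
          Measure.restrict_apply_univ, mul_comm]

variable {mΩ : MeasurableSpace Ω} {P : Measure Ω} [IsProbabilityMeasure P]

lemma measure_forall_lt_prodMk_mem_le_pow (ℱ : Filtration ℕ mΩ)
    {X : ℕ → Ω → E} {Y : ℕ → Ω → F} (hX : ∀ n, Measurable[ℱ n] (X n))
    (hY : ∀ n, Measurable[ℱ (n + 1)] (Y n))
    (hindep : ∀ n, Indep (ℱ n) (MeasurableSpace.comap (Y n) inferInstance) P)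
    {T : Set (E × F)} (hT : MeasurableSet T) {q : ℝ≥0∞}
    (hq : ∀ n x, P.map (Y n) {y | (x, y) ∈ T} ≤ q) (n : ℕ) :
    P {ω | ∀ k < n, (X k ω, Y k ω) ∈ T} ≤ q ^ n := by
  induction n with
  | zero => simp
  | succ n ih =>
    have past_mem : MeasurableSet[ℱ n] {ω | ∀ k < n, (X k ω, Y k ω) ∈ T} := by
      simp only [ofPred_forall]
      exact .iInter fun k => .iInter fun hk =>
        ((hX k).mono (ℱ.mono hk.le) le_rfl).prodMk ((hY k).mono (ℱ.mono hk) le_rfl) hT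
    calc P {ω | ∀ k < n + 1, (X k ω, Y k ω) ∈ T}
        = P ({ω | ∀ k < n, (X k ω, Y k ω) ∈ T} ∩ {ω | (X n ω, Y n ω) ∈ T}) := by
          simp only [Nat.forall_lt_succ_right, ofPred_and]
      _ ≤ P {ω | ∀ k < n, (X k ω, Y k ω) ∈ T} * q :=
          measure_inter_prodMk_mem_le_mul_of_indep (ℱ.le n) (hX n)
            ((hY n).mono (ℱ.le _) le_rfl) (hindep n) past_mem hT (hq n)
      _ ≤ q ^ n * q := by gcongr
      _ = q ^ (n + 1) := (pow_succ q n).symm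

end Trials

section RandomWalk

variable {Ω E : Type*} {mΩ : MeasurableSpace Ω} [MeasurableSpace E]

/-- The filtration whose `n`-th σ-algebra is generated by `ξ 0, …, ξ (n - 1)`. In contrast to
`Filtration.natural`, it leaves out `ξ n`, so it is independent of `ξ n` for independent `ξ`. -/
def strictPast (ξ : ℕ → Ω → E) (hξ : ∀ n, Measurable (ξ n)) : Filtration ℕ mΩ where
  seq n := ⨆ j ∈ Iio n, MeasurableSpace.comap (ξ j) inferInstance
  mono' _ _ hmn := biSup_mono fun _ hj => lt_of_lt_of_le hj hmn
  le' _ := iSup₂_le fun j _ => (hξ j).comap_le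

lemma measurable_strictPast {ξ : ℕ → Ω → E} (hξ : ∀ n, Measurable (ξ n)) {j n : ℕ} (hj : j < n) :
    Measurable[strictPast ξ hξ n] (ξ j) :=
  (comap_measurable (ξ j)).mono
    (le_biSup (fun j => MeasurableSpace.comap (ξ j) inferInstance) hj) le_rfl

lemma indep_strictPast_comap_prodMk {P : Measure Ω} {ξ : ℕ → Ω → E} (hξ : ∀ n, Measurable (ξ n))
    (hindep : iIndepFun ξ P) (n : ℕ) :
    Indep (strictPast ξ hξ n)
      (MeasurableSpace.comap (fun ω => (ξ n ω, ξ (n + 1) ω)) inferInstance) P := by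
  have disjoint : Disjoint (Iio n) {n, n + 1} := by
    simp only [disjoint_left, mem_Iio, mem_insert_iff, mem_singleton_iff]
    lia
  refine indep_of_indep_of_le_right
    (indep_iSup_of_disjoint (fun j => (hξ j).comap_le) hindep.iIndep disjoint) ?_
  rw [iSup_pair]
  exact (MeasurableSpace.comap_prodMk _ _).le

lemma measure_forall_lt_normSqDrop_sum_lt_le_pow [NormedAddCommGroup E]
    [SecondCountableTopology E] [BorelSpace E] {P : Measure Ω} {ξ : ℕ → Ω → E}
    (hξ : ∀ n, Measurable (ξ n)) (hindep : iIndepFun ξ P) {μ : Measure E}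
    (hμ : ∀ n, P.map (ξ n) = μ) {lam : ℝ} {q : ℝ≥0∞}
    (hq : ∀ x, (μ.prod μ) {y | normSqDrop x y < lam} ≤ q) (n : ℕ) :
    P {ω | ∀ k < n,
      normSqDrop (∑ j ∈ Finset.range (2 * k), ξ j ω) (ξ (2 * k) ω, ξ (2 * k + 1) ω) < lam} ≤
      q ^ n := by
  have := hindep.isProbabilityMeasure
  let ℱ : Filtration ℕ mΩ :=
    ⟨fun n => strictPast ξ hξ (2 * n), fun _ _ h => (strictPast ξ hξ).mono (by gcongr),
      fun n => (strictPast ξ hξ).le (2 * n)⟩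
  have map_pair (n : ℕ) : P.map (fun ω => (ξ (2 * n) ω, ξ (2 * n + 1) ω)) = μ.prod μ := by
    rw [(hindep.indepFun (by lia)).map_prod_eq_prod_map_map (hξ _).aemeasurable
      (hξ _).aemeasurable, hμ, hμ]
  refine measure_forall_lt_prodMk_mem_le_pow ℱ
    (X := fun k ω => ∑ j ∈ Finset.range (2 * k), ξ j ω)
    (Y := fun k ω => (ξ (2 * k) ω, ξ (2 * k + 1) ω)) (T := {p | normSqDrop p.1 p.2 < lam})
    (fun k => Finset.measurable_sum _ fun j hj =>
      measurable_strictPast hξ (Finset.mem_range.1 hj))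
    (fun k => (measurable_strictPast hξ (by lia)).prodMk (measurable_strictPast hξ (by lia)))
    (fun k => indep_strictPast_comap_prodMk hξ hindep (2 * k))
    (isOpen_lt continuous_normSqDrop continuous_const).measurableSet
    (fun k x => ?_) n
  rw [map_pair]
  exact hq x

end RandomWalk

lemma iIndepFun_curry {Ω ι κ 𝓧 : Type*} [MeasurableSpace Ω] [MeasurableSpace 𝓧] {P : Measure Ω}
    {X : ι → κ → Ω → 𝓧} (hX : ∀ i j, Measurable (X i j))
    (hindep : iIndepFun (fun p : ι × κ => X p.1 p.2) P) :
    iIndepFun (fun i ω j => X i j ω) P := by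
  have := hindep.isProbabilityMeasure
  have (i : ι) (j : κ) : IsProbabilityMeasure (P.map (X i j)) :=
    Measure.isProbabilityMeasure_map (hX i j).aemeasurable
  have measurable_uncurried : Measurable fun ω (p : ι × κ) => X p.1 p.2 ω :=
    measurable_pi_lambda _ fun p => hX p.1 p.2
  have marginal (i : ι) : P.map (fun ω j => X i j ω) = Measure.infinitePi fun j => P.map (X i j) :=
    (hindep.precomp (Prod.mk_right_injective i)).map_fun_eq_infinitePi_map (hX i)
  rw [iIndepFun_iff_map_fun_eq_infinitePi_map fun i => measurable_pi_lambda _ (hX i)]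
  calc P.map (fun ω i j => X i j ω)
      = (P.map fun ω (p : ι × κ) => X p.1 p.2 ω).map (MeasurableEquiv.curry ι κ 𝓧) :=
        (Measure.map_map (MeasurableEquiv.curry ι κ 𝓧).measurable measurable_uncurried).symm
    _ = (Measure.infinitePi fun p : ι × κ => P.map (X p.1 p.2)).map
          (MeasurableEquiv.curry ι κ 𝓧) :=
        congrArg _ (hindep.map_fun_eq_infinitePi_map fun p => hX p.1 p.2)
    _ = Measure.infinitePi fun i => Measure.infinitePi fun j => P.map (X i j) :=
        Measure.infinitePi_map_curry fun i j => P.map (X i j)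
    _ = Measure.infinitePi fun i => P.map (fun ω j => X i j ω) := by simp only [marginal]

section BrownianMotion

variable {Ω : Type*} [MeasurableSpace Ω] {P : Measure Ω}

lemma IsStdBM.hasIndepIncrements {B : ℝ → Ω → ℝ} (hB : IsStdBM P B) :
    HasIndepIncrements (fun t : ℝ≥0 => B t) P :=
  fun n t ht => hB.indep n (fun i => t i) (fun i => (t i).2) fun _ _ hij => ht hij

/-- The law of the increment of a standard `d`-dimensional Brownian motion over a time span `v`. -/
noncomputable def brownianIncrementLaw (d : ℕ) (v : ℝ≥0) : Measure (EuclideanSpace ℝ (Fin d)) :=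
  (Measure.pi fun _ => gaussianReal 0 v).map (WithLp.toLp 2)

instance brownianIncrementLaw.isProbabilityMeasure (d : ℕ) (v : ℝ≥0) :
    IsProbabilityMeasure (brownianIncrementLaw d v) :=
  Measure.isProbabilityMeasure_map (WithLp.measurable_toLp 2 _).aemeasurable

lemma brownianIncrementLaw.isOpenPosMeasure (d : ℕ) {v : ℝ≥0} (hv : v ≠ 0) :
    (brownianIncrementLaw d v).IsOpenPosMeasure := by
  have : (gaussianReal 0 v).IsOpenPosMeasure :=
    (gaussianReal_absolutelyContinuous' 0 hv).isOpenPosMeasure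
  exact (PiLp.continuous_toLp 2 _).isOpenPosMeasure_map (WithLp.toLp_surjective 2)

namespace IsStdBMVec

variable {d : ℕ} {γ : ℝ → Ω → EuclideanSpace ℝ (Fin d)}

lemma measurable (hγ : IsStdBMVec d P γ) (t : ℝ) : Measurable (γ t) :=
  (WithLp.measurable_toLp 2 _).comp (measurable_pi_lambda _ fun i => (hγ.coord i).measurable t)

lemma eval_zero (hγ : IsStdBMVec d P γ) (ω : Ω) : γ 0 ω = 0 := by
  ext i
  exact (hγ.coord i).start ω

lemma continuous (hγ : IsStdBMVec d P γ) (ω : Ω) : Continuous fun t => γ t ω :=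
  (PiLp.continuous_toLp 2 _).comp (continuous_pi fun i => (hγ.coord i).cont ω)

lemma map_sub (hγ : IsStdBMVec d P γ) {s t : ℝ} (hs : 0 ≤ s) (hst : s ≤ t) :
    P.map (fun ω => γ t ω - γ s ω) = brownianIncrementLaw d (t - s).toNNReal := by
  have coord_measurable (i : Fin d) : Measurable fun ω => γ t ω i - γ s ω i :=
    ((hγ.coord i).measurable t).sub ((hγ.coord i).measurable s)
  have coord_indep : iIndepFun (fun (i : Fin d) ω => γ t ω i - γ s ω i) P :=
    hγ.indepCoord.comp (fun _ f => f t - f s) fun _ => by fun_prop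
  have coord_law : P.map (fun ω i => γ t ω i - γ s ω i) =
      Measure.pi fun _ : Fin d => gaussianReal 0 (t - s).toNNReal := by
    rw [coord_indep.map_fun_eq_pi_map fun i => (coord_measurable i).aemeasurable]
    exact congrArg _ (funext fun i => (hγ.coord i).gauss s t hs hst)
  rw [brownianIncrementLaw, ← coord_law,
    Measure.map_map (WithLp.measurable_toLp 2 _) (measurable_pi_lambda _ coord_measurable)]
  rfl

lemma hasIndepIncrements (hγ : IsStdBMVec d P γ) :
    HasIndepIncrements (fun t : ℝ≥0 => γ t) P := by
  refine .of_nat fun t ht _ => ?_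
  have increment_measurable (i : Fin d) (n : ℕ) :
      Measurable fun ω => γ (t (n + 1)) ω i - γ (t n) ω i :=
    ((hγ.coord i).measurable _).sub ((hγ.coord i).measurable _)
  have across_coord :
      iIndepFun (fun (i : Fin d) ω (n : ℕ) => γ (t (n + 1)) ω i - γ (t n) ω i) P :=
    hγ.indepCoord.comp (fun _ f n => f (t (n + 1)) - f (t n)) fun _ => by fun_prop
  have joint := iIndepFun_uncurry' increment_measurable across_coord
    fun i => (hγ.coord i).hasIndepIncrements.nat ht
  exact (iIndepFun_curry (fun n i => increment_measurable i n)
    (joint.precomp Prod.swap_injective)).comp (fun _ => WithLp.toLp 2)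
    fun _ => WithLp.measurable_toLp 2 _

end IsStdBMVec

end BrownianMotion

section Drawdown

variable {Ω : Type*} {X : ℝ → Ω → ℝ} {ω : Ω}

lemma le_runMax (hX : Continuous fun t => X t ω) {s t : ℝ} (hs : 0 ≤ s) (hst : s ≤ t) :
    X s ω ≤ runMax X t ω := by
  have bounded : BddAbove (range fun r : Icc (0 : ℝ) t => X r ω) :=
    isCompact_range (hX.comp continuous_subtype_val) |>.bddAbove
  exact le_ciSup bounded ⟨s, hs, hst⟩

lemma ddTime_le_of_le_sub {lam : ℝ} (hX : Continuous fun t => X t ω) {s t : ℝ} (hs : 0 ≤ s)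
    (hst : s ≤ t) (hdrop : lam ≤ X s ω - X t ω) : ddTime lam X ω ≤ t :=
  csInf_le ⟨0, fun _ ht => ht.1⟩
    ⟨hs.trans hst, hdrop.trans (sub_le_sub_right (le_runMax hX hs hst) _)⟩

end Drawdown

lemma exists_pos_le_ofReal_exp_neg {q : ℝ≥0∞} (hq : q < 1) :
    ∃ L : ℝ, 0 < L ∧ q ≤ ENNReal.ofReal (Real.exp (-L)) := by
  have tendsto_one : Tendsto (fun L : ℝ => ENNReal.ofReal (Real.exp (-L))) (nhdsWithin 0 (Ioi 0))
      (nhds 1) := by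
    have cont : Continuous fun L : ℝ => ENNReal.ofReal (Real.exp (-L)) :=
      ENNReal.continuous_ofReal.comp (by fun_prop)
    simpa using (cont.tendsto 0).mono_left nhdsWithin_le_nhds
  obtain ⟨L, le_exp, L_pos⟩ :=
    ((tendsto_one.eventually_const_le hq).and self_mem_nhdsWithin).exists
  exact ⟨L, L_pos, le_exp⟩

lemma div_two_le_natFloor {x : ℝ} (hx : 1 ≤ x) : x / 2 ≤ ⌊x⌋₊ := by
  have one_le : (1 : ℝ) ≤ ⌊x⌋₊ := by exact_mod_cast (Nat.one_le_floor_iff x).2 hx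
  linarith [Nat.lt_floor_add_one x]

lemma exists_pos_le_ofReal_exp_of_le_pow {f : ℝ → ℝ≥0∞} (hf : Antitone f) {a₀ : ℝ} (ha₀ : 0 < a₀)
    {q : ℝ≥0∞} (hq : q < 1) (hfq : ∀ n : ℕ, f (n * a₀) ≤ q ^ n) :
    ∃ c : ℝ, 0 < c ∧ ∀ a, a₀ ≤ a → f a ≤ ENNReal.ofReal (Real.exp (-c * a)) := by
  obtain ⟨L, hL, q_le⟩ := exists_pos_le_ofReal_exp_neg hq
  refine ⟨L / (2 * a₀), by positivity, fun a ha => ?_⟩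
  have one_le : 1 ≤ a / a₀ := (one_le_div ha₀).2 ha
  have floor_mul_le : ⌊a / a₀⌋₊ * a₀ ≤ a :=
    (le_div_iff₀ ha₀).1 (Nat.floor_le (zero_le_one.trans one_le))
  calc f a ≤ f (⌊a / a₀⌋₊ * a₀) := hf floor_mul_le
    _ ≤ q ^ ⌊a / a₀⌋₊ := hfq _
    _ ≤ ENNReal.ofReal (Real.exp (-L)) ^ ⌊a / a₀⌋₊ := by gcongr
    _ = ENNReal.ofReal (Real.exp (-(⌊a / a₀⌋₊ * L))) := by
        rw [← ENNReal.ofReal_pow (Real.exp_nonneg _), ← Real.exp_nat_mul, mul_neg]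
    _ ≤ ENNReal.ofReal (Real.exp (-(a / a₀ / 2 * L))) := by
        gcongr
        exact div_two_le_natFloor one_le
    _ = ENNReal.ofReal (Real.exp (-(L / (2 * a₀)) * a)) := by
        congr 2
        ring

section SquaredBessel

variable {Ω : Type*} [MeasurableSpace Ω] {P : Measure Ω} {d : ℕ}

/-- The squared Bessel process of dimension `d` built from a `d`-dimensional Brownian motion;
`sqBessel4` is the case `d = 4`. -/
noncomputable def sqBessel (γ : ℝ → Ω → EuclideanSpace ℝ (Fin d)) (t : ℝ) (ω : Ω) : ℝ := ‖γ t ω‖ ^ 2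

namespace IsStdBMVec

variable {γ : ℝ → Ω → EuclideanSpace ℝ (Fin d)}

lemma normSqDrop_lt_of_lt_ddTime_sqBessel (hγ : IsStdBMVec d P γ) {lam : ℝ} {ω : Ω} (r : ℝ)
    {s t : ℝ} (hs : 0 ≤ s) (hst : s ≤ t) (ht : t < ddTime lam (sqBessel γ) ω) :
    normSqDrop (γ r ω) (γ s ω - γ r ω, γ t ω - γ s ω) < lam := by
  have path_continuous : Continuous fun t => sqBessel γ t ω := (hγ.continuous ω).norm.pow 2
  by_contra! hdrop
  simp only [normSqDrop, add_sub_cancel] at hdrop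
  exact ht.not_ge (ddTime_le_of_le_sub path_continuous hs hst hdrop)

lemma measure_lt_ddTime_sqBessel_le_pow (hγ : IsStdBMVec d P γ) {lam : ℝ} {v : ℝ≥0} {q : ℝ≥0∞}
    (hq : ∀ x, ((brownianIncrementLaw d v).prod (brownianIncrementLaw d v))
      {y | normSqDrop x y < lam} ≤ q) (n : ℕ) :
    P {ω | n * (2 * v) < ddTime lam (sqBessel γ) ω} ≤ q ^ n := by
  let grid (j : ℕ) : ℝ≥0 := j * v
  have grid_mono : Monotone grid := fun i j hij => by unfold grid; gcongr
  let ξ (j : ℕ) (ω : Ω) := γ (grid (j + 1)) ω - γ (grid j) ω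
  have ξ_measurable (j : ℕ) : Measurable (ξ j) := (hγ.measurable _).sub (hγ.measurable _)
  have ξ_law (j : ℕ) : P.map (ξ j) = brownianIncrementLaw d v := by
    have hstep : (grid (j + 1) - grid j : ℝ).toNNReal = v := by simp [grid, add_mul]
    rw [← hstep]
    exact hγ.map_sub (grid j).coe_nonneg (grid_mono j.le_succ)
  have sum_ξ (k : ℕ) (ω : Ω) : ∑ j ∈ Finset.range k, ξ j ω = γ (grid k) ω := by
    rw [Finset.sum_range_sub (fun j => γ (grid j) ω)]
    simp [grid, hγ.eval_zero]
  refine (measure_mono fun ω hω k hk => ?_).trans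
    (measure_forall_lt_normSqDrop_sum_lt_le_pow ξ_measurable (hγ.hasIndepIncrements.nat grid_mono)
      ξ_law hq n)
  have before_ddTime : grid (2 * k + 1 + 1) < ddTime lam (sqBessel γ) ω := by
    calc (grid (2 * k + 1 + 1) : ℝ) ≤ grid (2 * n) := grid_mono (by lia)
      _ = n * (2 * v) := by
        simp only [grid]
        push_cast
        ring
      _ < ddTime lam (sqBessel γ) ω := hω
  rw [sum_ξ]
  exact hγ.normSqDrop_lt_of_lt_ddTime_sqBessel _ (grid _).coe_nonneg
    (grid_mono (Nat.le_succ _)) before_ddTime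

end IsStdBMVec

theorem sqBessel4_drawdown_time_tail_general [NeZero d]
    (γ : ℝ → Ω → EuclideanSpace ℝ (Fin d)) (hγ : IsStdBMVec d P γ) (lam : ℝ) {a₀ : ℝ}
    (ha₀ : 0 < a₀) :
    ∃ c : ℝ, 0 < c ∧ ∀ a : ℝ, a₀ ≤ a →
      P {ω | a < ddTime lam (sqBessel γ) ω} ≤ ENNReal.ofReal (Real.exp (-c * a)) := by
  lift a₀ to ℝ≥0 using ha₀.le
  have half_ne_zero : a₀ / 2 ≠ 0 := by
    have : a₀ ≠ 0 := by exact_mod_cast ha₀.ne'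
    positivity
  have := brownianIncrementLaw.isOpenPosMeasure d half_ne_zero
  obtain ⟨q, q_lt_one, hq⟩ :=
    exists_lt_one_forall_measure_normSqDrop_lt_le (brownianIncrementLaw d (a₀ / 2)) lam
  have tail_le_pow (n : ℕ) : P {ω | n * a₀ < ddTime lam (sqBessel γ) ω} ≤ q ^ n := by
    simpa [mul_div_cancel₀] using hγ.measure_lt_ddTime_sqBessel_le_pow hq n
  have tail_antitone : Antitone fun a => P {ω | a < ddTime lam (sqBessel γ) ω} :=
    fun _ _ hab => measure_mono fun _ hω => hab.trans_lt hω
  exact exists_pos_le_ofReal_exp_of_le_pow tail_antitone ha₀ q_lt_one tail_le_pow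

end SquaredBessel

/-- there is `c > 0` such that `P{τ₁ > a} ≤ exp(-c a^{1/2})` for all `a ≥ 2`,
where `τ₁` is the unit drawdown time of a squared four-dimensional Bessel process started at `0`. -/
theorem sqBessel4_drawdown_time_tail
    {Ω : Type*} [MeasurableSpace Ω] (P : Measure Ω) [IsProbabilityMeasure P]
    (γ : ℝ → Ω → EuclideanSpace ℝ (Fin 4)) (hγ : IsStdBMVec 4 P γ) :
    ∃ c : ℝ, 0 < c ∧ ∀ a : ℝ, 2 ≤ a →
      P {ω | a < ddTime 1 (sqBessel4 γ) ω}
        ≤ ENNReal.ofReal (Real.exp (-c * a ^ ((1:ℝ)/2))) := by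
  obtain ⟨c, hc, tail⟩ := sqBessel4_drawdown_time_tail_general γ hγ 1 two_pos
  refine ⟨c, hc, fun a ha => (tail a ha).trans ?_⟩
  have rpow_half_le : a ^ ((1 : ℝ) / 2) ≤ a :=
    Real.rpow_le_self_of_one_le (by linarith) (by norm_num)
  exact ENNReal.ofReal_le_ofReal (Real.exp_le_exp.2
    (mul_le_mul_of_nonpos_left rpow_half_le (neg_nonpos.2 hc.le)))
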